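/- Let 1/4 < s0 < 1/2 and 1/2 < s1 < min(1, 3s0). There is a constant C = C(s0, s1) such that for all v1, v2, v3 ∈ H^{s0}(T): ‖v1 v2 v3‖_{H^{s1−1}(T)} ≤ C ‖v1‖_{H^{s0}} ‖v2‖_{H^{s0}} ‖v3‖_{H^{s0}}. -/

import Mathlib

/-!
In terms of the coefficients `a i k = ⟨k⟩^{s0} |v̂_i(k)|`, which lie in `ℓ²`, the estimate concerns
the trilinear convolution with weight `⟨k⟩^{-σ} ⟨k₁⟩^{-s0} ⟨k₂⟩^{-s0} ⟨k₃⟩^{-s0}`, where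
`σ = 1 - s1` and `k = k₁ + k₂ + k₃`. Put `α = (σ + 3 s0) / 2`; the hypothesis `s1 < 3 s0` says
exactly that `2 α > 1`, i.e. that `⟨·⟩^{-α}` is in `ℓ²`.

The exponent vector `(σ, s0, s0, s0)` is a convex combination of the six permutations of
`(α, α, 0, 0)`, so the weight is bounded by the sum of the six products `⟨kᵢ⟩^{-α} ⟨kⱼ⟩^{-α}`
(`weight_le`). By Cauchy–Schwarz, a factor `aᵢ ⟨kᵢ⟩^{-α}` is in `ℓ¹`. If the pair is made of two of
the inputs, the term is controlled by `ℓ¹ * ℓ¹ * ℓ² ⊆ ℓ²` (`sqSum_tri_le`). If the pair contains the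
output frequency, `ℓ¹ * ℓ² * ℓ² ⊆ ℓ^∞` and the remaining `⟨k⟩^{-α}` is in `ℓ²`
(`sqSum_mul_tri_le`). All sums are taken in `ℝ≥0∞`, so that no summability has to be tracked.
-/

open MeasureTheory Complex
open scoped FourierTransform Classical BigOperators

/-- Japanese bracket `⟨x⟩ = (1+x²)^{1/2}`. -/
noncomputable def jp (x : ℝ) : ℝ := (1 + x ^ 2) ^ ((1:ℝ)/2)

/-- The `H^s(T)` norm of a sequence of Fourier coefficients. -/
noncomputable def HNorm (s : ℝ) (f : ℤ → ℂ) : ℝ :=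
  (∑' k : ℤ, jp k ^ (2 * s) * ‖f k‖ ^ 2) ^ ((1:ℝ)/2)

/-- Membership in `H^s(T)`, via Fourier coefficients. -/
def MemH (s : ℝ) (f : ℤ → ℂ) : Prop :=
  Summable (fun k : ℤ => jp k ^ (2 * s) * ‖f k‖ ^ 2)

/-- The modified dispersion relation `φ(k) = k³ + k|f̂(k)|²`. -/
noncomputable def phi (f : ℤ → ℂ) (k : ℤ) : ℝ := (k:ℝ)^3 + (k:ℝ) * ‖f k‖^2

/-- The weight-integrand of the modified Bourgain `Y^{s,b}` norm:
`⟨τ − k³ − k|f̂(k)|²⟩^{2b} ⟨k⟩^{2s} |z̃(τ,k)|²`, where `z̃(·,k)` is the Fourier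
transform in time of `ẑ_k(t) = z t k`. -/
noncomputable def Ywt (f : ℤ → ℂ) (s b : ℝ) (z : ℝ → ℤ → ℂ) (k : ℤ) (τ : ℝ) : ℝ :=
  jp (τ - phi f k) ^ (2*b) * jp k ^ (2*s) * ‖𝓕 (fun t : ℝ => z t k) τ‖^2

/-- The modified Bourgain norm `‖z‖_{Y^{s,b}}`. -/
noncomputable def YNorm (f : ℤ → ℂ) (s b : ℝ) (z : ℝ → ℤ → ℂ) : ℝ :=
  (∑' k : ℤ, ∫ τ : ℝ, Ywt f s b z k τ) ^ ((1:ℝ)/2)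

/-- Membership in the modified Bourgain space `Y^{s,b}`. -/
def MemY (f : ℤ → ℂ) (s b : ℝ) (z : ℝ → ℤ → ℂ) : Prop :=
  (∀ k : ℤ, Integrable (Ywt f s b z k)) ∧
    Summable (fun k : ℤ => ∫ τ : ℝ, Ywt f s b z k τ)

/-- The restricted norm `‖v‖_{Y^{s,b}_T} = inf {‖u‖_{Y^{s,b}} : u = v on (−T,T)}`. -/
noncomputable def YNormT (f : ℤ → ℂ) (s b T : ℝ) (z : ℝ → ℤ → ℂ) : ℝ :=
  sInf {r : ℝ | ∃ u : ℝ → ℤ → ℂ,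
    (∀ t ∈ Set.Ioo (-T) T, ∀ k : ℤ, u t k = z t k) ∧ r = YNorm f s b u}

/-- The `L^∞((0,T), H^s)` norm. -/
noncomputable def LinftyH (s T : ℝ) (z : ℝ → ℤ → ℂ) : ℝ :=
  ⨆ t ∈ Set.Ioo (0:ℝ) T, HNorm s (z t)

/-- The non-resonant trilinear operator `NR`. -/
noncomputable def NR (v1 v2 v3 : ℤ → ℂ) (k : ℤ) : ℂ :=
  -(Complex.I * (k:ℂ) / 3) *
    ∑' p : ℤ × ℤ,
      if k ≠ 0 ∧ p.1 ≠ 0 ∧ p.2 ≠ 0 ∧ k - p.1 - p.2 ≠ 0 ∧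
          (p.1 + p.2) * (p.2 + (k - p.1 - p.2)) * ((k - p.1 - p.2) + p.1) ≠ 0
      then v1 p.1 * v2 p.2 * v3 (k - p.1 - p.2) else 0

/-- `E(k1,k2,k3) = k1|f̂(k1)|² + k2|f̂(k2)|² + k3|f̂(k3)|² − k|f̂(k)|²`, `k = k1+k2+k3`. -/
noncomputable def Ecoef (f : ℤ → ℂ) (k1 k2 k3 : ℤ) : ℝ :=
  (k1:ℝ) * ‖f k1‖^2 + (k2:ℝ) * ‖f k2‖^2 + (k3:ℝ) * ‖f k3‖^2
    - ((k1+k2+k3 : ℤ):ℝ) * ‖f (k1+k2+k3)‖^2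

/-- `k_max = max(|k1|,|k2|,|k3|)` as a real number. -/
noncomputable def kmax (k1 k2 k3 : ℤ) : ℝ := max (max |(k1:ℝ)| |(k2:ℝ)|) |(k3:ℝ)|

open scoped ENNReal

/-! ### Convolution inequalities in `ℝ≥0∞` -/

/-- The square of the `ℓ²` norm, with values in `[0, ∞]`. -/
noncomputable def sqSum (f : ℤ → ℝ≥0∞) : ℝ≥0∞ := ∑' k, f k ^ 2

/-- Convolution on `ℤ`. -/
noncomputable def conv (A B : ℤ → ℝ≥0∞) (k : ℤ) : ℝ≥0∞ := ∑' j, A j * B (k - j)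

/-- Triple convolution on `ℤ`, written as in the theorem as a sum over the first two frequencies. -/
noncomputable def tri (A B C : ℤ → ℝ≥0∞) (k : ℤ) : ℝ≥0∞ :=
  ∑' p : ℤ × ℤ, A p.1 * B p.2 * C (k - p.1 - p.2)

lemma half_sq (x : ℝ≥0∞) : (x ^ (1 / 2 : ℝ)) ^ 2 = x := by
  rw [← ENNReal.rpow_two, ← ENNReal.rpow_mul]; norm_num

lemma tsum_mul_sq_le {ι : Type*} (f g : ι → ℝ≥0∞) :
    (∑' i, f i * g i) ^ 2 ≤ (∑' i, f i ^ 2) * ∑' i, g i ^ 2 := by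
  let _ : MeasurableSpace ι := ⊤
  have h := ENNReal.lintegral_mul_le_Lp_mul_Lq (Measure.count : Measure ι)
    (p := 2) (q := 2) Real.HolderConjugate.two_two (f := f) (g := g)
    (measurable_from_top).aemeasurable (measurable_from_top).aemeasurable
  simp only [lintegral_count, Pi.mul_apply, ENNReal.rpow_two] at h
  calc (∑' i, f i * g i) ^ 2 ≤ _ := pow_le_pow_left' h 2
    _ = _ := by rw [mul_pow, half_sq, half_sq]

lemma sqSum_shift (B : ℤ → ℝ≥0∞) (j : ℤ) : ∑' k, B (k - j) ^ 2 = sqSum B :=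
  (Equiv.subRight j).tsum_eq (fun k => B k ^ 2)

lemma sqSum_reflect (B : ℤ → ℝ≥0∞) (k : ℤ) : ∑' j, B (k - j) ^ 2 = sqSum B :=
  (Equiv.subLeft k).tsum_eq (fun k => B k ^ 2)

lemma conv_sq_le (B C : ℤ → ℝ≥0∞) (k : ℤ) : conv B C k ^ 2 ≤ sqSum B * sqSum C := by
  refine (tsum_mul_sq_le _ _).trans_eq ?_
  rw [sqSum_reflect]; rfl

/-- Young's inequality `ℓ¹ * ℓ² ⊆ ℓ²`. The weight `A` is split evenly between the two factors of
the Cauchy–Schwarz inequality. -/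
lemma sqSum_conv_le (A D : ℤ → ℝ≥0∞) : sqSum (conv A D) ≤ (∑' j, A j) ^ 2 * sqSum D := by
  have key (k : ℤ) : conv A D k ^ 2 ≤ (∑' j, A j) * ∑' j, A j * D (k - j) ^ 2 := by
    have h := tsum_mul_sq_le (fun j => A j ^ (1 / 2 : ℝ)) (fun j => A j ^ (1 / 2 : ℝ) * D (k - j))
    simpa only [conv, mul_pow, half_sq, ← mul_assoc, ← sq] using h
  calc sqSum (conv A D) ≤ ∑' k, (∑' j, A j) * ∑' j, A j * D (k - j) ^ 2 :=
        ENNReal.tsum_le_tsum key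
    _ = (∑' j, A j) * ∑' j, A j * sqSum D := by
        rw [ENNReal.tsum_mul_left, ENNReal.tsum_comm]
        simp only [ENNReal.tsum_mul_left, sqSum_shift]
    _ = _ := by rw [ENNReal.tsum_mul_right, sq, mul_assoc]

lemma tri_eq_conv (A B C : ℤ → ℝ≥0∞) : tri A B C = conv A (conv B C) := by
  funext k
  simp only [tri, conv, ← ENNReal.tsum_mul_left]
  rw [← ENNReal.tsum_prod (f := fun a b => A a * (B b * C (k - a - b)))]
  simp only [mul_assoc]

lemma tri_swap₁₂ (A B C : ℤ → ℝ≥0∞) : tri A B C = tri B A C := by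
  funext k
  refine Eq.trans ?_
    ((Equiv.prodComm ℤ ℤ).tsum_eq (fun p : ℤ × ℤ => B p.1 * A p.2 * C (k - p.1 - p.2)))
  refine tsum_congr fun p => ?_
  simp only [Equiv.prodComm_apply, Prod.fst_swap, Prod.snd_swap]
  rw [sub_right_comm, mul_comm (A _)]

lemma tri_swap₂₃ (A B C : ℤ → ℝ≥0∞) : tri A B C = tri A C B := by
  have hc : conv B C = conv C B := by
    funext k
    refine Eq.trans ?_ ((Equiv.subLeft k).tsum_eq (fun j => C j * B (k - j)))
    refine tsum_congr fun j => ?_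
    simp [mul_comm]
  rw [tri_eq_conv, tri_eq_conv, hc]

/-- `ℓ¹ * ℓ¹ * ℓ² ⊆ ℓ²`. -/
lemma sqSum_tri_le (A B C : ℤ → ℝ≥0∞) :
    sqSum (tri A B C) ≤ (∑' j, A j) ^ 2 * (∑' j, B j) ^ 2 * sqSum C := by
  rw [tri_eq_conv, mul_assoc]
  exact (sqSum_conv_le _ _).trans (mul_le_mul_right (sqSum_conv_le _ _) _)

/-- `ℓ² · (ℓ¹ * ℓ² * ℓ²) ⊆ ℓ²`, since `ℓ¹ * ℓ² * ℓ² ⊆ ℓ^∞`. -/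
lemma sqSum_mul_tri_le (w A B C : ℤ → ℝ≥0∞) :
    sqSum (fun k => w k * tri A B C k) ≤ sqSum w * ((∑' j, A j) ^ 2 * sqSum B * sqSum C) := by
  have key (k : ℤ) : tri A B C k ^ 2 ≤ (∑' j, A j) ^ 2 * sqSum B * sqSum C := by
    have hc (m : ℤ) : conv B C m ≤ (sqSum B * sqSum C) ^ (1 / 2 : ℝ) := by
      rw [one_div, ENNReal.le_rpow_inv_iff two_pos, ENNReal.rpow_two]
      exact conv_sq_le B C m
    rw [tri_eq_conv, mul_assoc, ← half_sq (sqSum B * sqSum C), ← mul_pow,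
      ← ENNReal.tsum_mul_right]
    exact pow_le_pow_left' (ENNReal.tsum_le_tsum fun j => mul_le_mul_right (hc _) _) 2
  simp only [sqSum, mul_pow] at key ⊢
  rw [← ENNReal.tsum_mul_right]
  exact ENNReal.tsum_le_tsum fun k => mul_le_mul_right (key k) _

lemma add_six_sq_le (x₁ x₂ x₃ x₄ x₅ x₆ : ℝ≥0∞) :
    (x₁ + x₂ + x₃ + x₄ + x₅ + x₆) ^ 2 ≤
      6 * (x₁ ^ 2 + x₂ ^ 2 + x₃ ^ 2 + x₄ ^ 2 + x₅ ^ 2 + x₆ ^ 2) := by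
  have h := tsum_mul_sq_le (fun _ : Fin 6 => (1 : ℝ≥0∞)) ![x₁, x₂, x₃, x₄, x₅, x₆]
  simpa [tsum_fintype, Fin.sum_univ_succ, add_assoc] using h

/-- The `ℓ²` bound for a trilinear convolution whose weight has been replaced by the sum of the six
products `w(kᵢ) w(kⱼ)`. -/
lemma sqSum_six_le (w a b c : ℤ → ℝ≥0∞) :
    sqSum (fun k => w k * tri (a * w) b c k + w k * tri a (b * w) c k + w k * tri a b (c * w) k
        + tri (a * w) (b * w) c k + tri (a * w) b (c * w) k + tri a (b * w) (c * w) k) ≤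
      36 * sqSum w ^ 2 * (sqSum a * sqSum b * sqSum c) := by
  have l1 (f : ℤ → ℝ≥0∞) : (∑' j, (f * w) j) ^ 2 ≤ sqSum f * sqSum w := tsum_mul_sq_le f w
  set M := sqSum w ^ 2 * (sqSum a * sqSum b * sqSum c) with hM
  have one (f g h : ℤ → ℝ≥0∞) : sqSum (fun k => w k * tri (f * w) g h k) ≤
      sqSum w ^ 2 * (sqSum f * sqSum g * sqSum h) :=
    calc _ ≤ _ := sqSum_mul_tri_le w (f * w) g h
      _ ≤ sqSum w * (sqSum f * sqSum w * sqSum g * sqSum h) := by gcongr; exact l1 f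
      _ = _ := by ring
  have two (f g h : ℤ → ℝ≥0∞) : sqSum (tri (f * w) (g * w) h) ≤
      sqSum w ^ 2 * (sqSum f * sqSum g * sqSum h) :=
    calc _ ≤ _ := sqSum_tri_le (f * w) (g * w) h
      _ ≤ sqSum f * sqSum w * (sqSum g * sqSum w) * sqSum h := by
        gcongr
        · exact l1 f
        · exact l1 g
      _ = _ := by ring
  have h₁ : sqSum (fun k => w k * tri (a * w) b c k) ≤ M := one a b c
  have h₂ : sqSum (fun k => w k * tri a (b * w) c k) ≤ M := by
    rw [tri_swap₁₂]; exact (one b a c).trans_eq (by rw [hM]; ring)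
  have h₃ : sqSum (fun k => w k * tri a b (c * w) k) ≤ M := by
    rw [tri_swap₂₃, tri_swap₁₂]; exact (one c a b).trans_eq (by rw [hM]; ring)
  have h₄ : sqSum (tri (a * w) (b * w) c) ≤ M := two a b c
  have h₅ : sqSum (tri (a * w) b (c * w)) ≤ M := by
    rw [tri_swap₂₃]; exact (two a c b).trans_eq (by rw [hM]; ring)
  have h₆ : sqSum (tri a (b * w) (c * w)) ≤ M := by
    rw [tri_swap₁₂, tri_swap₂₃]; exact (two b c a).trans_eq (by rw [hM]; ring)
  calc _ ≤ _ := ENNReal.tsum_le_tsum fun k => add_six_sq_le _ _ _ _ _ _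
    _ = 6 * (sqSum (fun k => w k * tri (a * w) b c k) + sqSum (fun k => w k * tri a (b * w) c k)
          + sqSum (fun k => w k * tri a b (c * w) k) + sqSum (tri (a * w) (b * w) c)
          + sqSum (tri (a * w) b (c * w)) + sqSum (tri a (b * w) (c * w))) := by
        rw [ENNReal.tsum_mul_left]
        simp only [ENNReal.tsum_add, sqSum]
    _ ≤ 6 * (M + M + M + M + M + M) := by gcongr
    _ = _ := by rw [hM]; ring

/-! ### The weights -/

lemma jp_pos (x : ℝ) : 0 < jp x := by unfold jp; positivity

lemma summable_jp_rpow {b : ℝ} (hb : 1 < b) : Summable fun k : ℤ => jp k ^ (-b) := by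
  refine Summable.of_norm_bounded_eventually (Real.summable_abs_int_rpow hb) ?_
  filter_upwards [(Set.finite_singleton (0 : ℤ)).compl_mem_cofinite] with k hk
  have hk : 0 < |(k : ℝ)| := by simpa using hk
  have hjp : |(k : ℝ)| ≤ jp k := by
    rw [jp, ← Real.sqrt_eq_rpow]
    exact Real.abs_le_sqrt (by linarith)
  rw [Real.norm_of_nonneg (Real.rpow_nonneg (jp_pos _).le _)]
  exact Real.rpow_le_rpow_of_nonpos hk hjp (by linarith)

/-- The weight with exponents `(σ, s, s, s)` is bounded by the sum of the six weights whose
exponents are permutations of `(α, α, 0, 0)`, of which the former is a convex combination. -/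
lemma weight_le {σ s α : ℝ} (hσ : 0 < σ) (hs : σ ≤ 3 * s) (hα : 2 * α = σ + 3 * s)
    {x₀ x₁ x₂ x₃ : ℝ} (h₀ : 0 < x₀) (h₁ : 0 < x₁) (h₂ : 0 < x₂) (h₃ : 0 < x₃) :
    x₀ ^ (-σ) * (x₁ ^ (-s) * x₂ ^ (-s) * x₃ ^ (-s)) ≤
      x₀ ^ (-α) * x₁ ^ (-α) + x₀ ^ (-α) * x₂ ^ (-α) + x₀ ^ (-α) * x₃ ^ (-α)
      + x₁ ^ (-α) * x₂ ^ (-α) + x₁ ^ (-α) * x₃ ^ (-α) + x₂ ^ (-α) * x₃ ^ (-α) := by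
  simp only [Real.rpow_def_of_pos h₀, Real.rpow_def_of_pos h₁, Real.rpow_def_of_pos h₂,
    Real.rpow_def_of_pos h₃, ← Real.exp_add]
  generalize Real.log x₀ = t₀
  generalize Real.log x₁ = t₁
  generalize Real.log x₂ = t₂
  generalize Real.log x₃ = t₃
  by_contra! H
  have p₀₁ := Real.exp_pos (t₀ * -α + t₁ * -α)
  have p₀₂ := Real.exp_pos (t₀ * -α + t₂ * -α)
  have p₀₃ := Real.exp_pos (t₀ * -α + t₃ * -α)
  have p₁₂ := Real.exp_pos (t₁ * -α + t₂ * -α)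
  have p₁₃ := Real.exp_pos (t₁ * -α + t₃ * -α)
  have p₂₃ := Real.exp_pos (t₂ * -α + t₃ * -α)
  -- every one of the six exponents would be smaller than their convex combination
  have e₀₁ := Real.exp_lt_exp.1 ((by linarith : Real.exp (t₀ * -α + t₁ * -α) ≤ _).trans_lt H)
  have e₀₂ := Real.exp_lt_exp.1 ((by linarith : Real.exp (t₀ * -α + t₂ * -α) ≤ _).trans_lt H)
  have e₀₃ := Real.exp_lt_exp.1 ((by linarith : Real.exp (t₀ * -α + t₃ * -α) ≤ _).trans_lt H)
  have e₁₂ := Real.exp_lt_exp.1 ((by linarith : Real.exp (t₁ * -α + t₂ * -α) ≤ _).trans_lt H)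
  have e₁₃ := Real.exp_lt_exp.1 ((by linarith : Real.exp (t₁ * -α + t₃ * -α) ≤ _).trans_lt H)
  have e₂₃ := Real.exp_lt_exp.1 ((by linarith : Real.exp (t₂ * -α + t₃ * -α) ≤ _).trans_lt H)
  -- weights of the convex combination: `σ / (3 α)` on the pairs `(0, i)` and
  -- `(3 s - σ) / (6 α)` on the other three
  obtain rfl : α = (σ + 3 * s) / 2 := by linarith
  have q₁ := mul_pos hσ (add_pos (add_pos (sub_pos.2 e₀₁) (sub_pos.2 e₀₂)) (sub_pos.2 e₀₃))
  have q₂ := mul_nonneg (sub_nonneg.2 hs)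
    (add_pos (add_pos (sub_pos.2 e₁₂) (sub_pos.2 e₁₃)) (sub_pos.2 e₂₃)).le
  linarith

lemma jp_rpow_two_mul (x s : ℝ) : jp x ^ (2 * s) = (jp x ^ s) ^ 2 := by
  rw [mul_comm, Real.rpow_mul (jp_pos x).le, Real.rpow_two]

/-! ### Comparison with the Sobolev norms -/

/-- The coefficients `⟨k⟩^s |f k|`, as elements of `[0, ∞]`. -/
noncomputable def wcoef (s : ℝ) (f : ℤ → ℂ) (k : ℤ) : ℝ≥0∞ := ENNReal.ofReal (jp k ^ s) * ‖f k‖ₑ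

lemma ofReal_sq_eq (s : ℝ) (f : ℤ → ℂ) (k : ℤ) :
    ENNReal.ofReal (jp k ^ (2 * s) * ‖f k‖ ^ 2) = wcoef s f k ^ 2 := by
  have := Real.rpow_nonneg (jp_pos k).le s
  rw [jp_rpow_two_mul, wcoef, ← mul_pow, ENNReal.ofReal_pow (by positivity),
    ENNReal.ofReal_mul this, ofReal_norm]

/-- No summability is needed: when the sum diverges, both sides are `0`. -/
lemma HNorm_eq (s : ℝ) (f : ℤ → ℂ) : HNorm s f = √(sqSum (wcoef s f)).toReal := by
  have h := ENNReal.tsum_toReal_eq (f := fun k : ℤ => ENNReal.ofReal (jp k ^ (2 * s) * ‖f k‖ ^ 2))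
    (fun _ => ENNReal.ofReal_ne_top)
  rw [HNorm, ← Real.sqrt_eq_rpow, sqSum]
  simp only [← ofReal_sq_eq]
  rw [h]
  congr 1
  refine tsum_congr fun k => (ENNReal.toReal_ofReal ?_).symm
  have := Real.rpow_nonneg (jp_pos k).le (2 * s)
  positivity

lemma sqSum_wcoef_ne_top {s : ℝ} {f : ℤ → ℂ} (hf : MemH s f) : sqSum (wcoef s f) ≠ ∞ := by
  simp only [sqSum, ← ofReal_sq_eq]
  exact hf.tsum_ofReal_ne_top

lemma enorm_eq_wcoef (s : ℝ) (f : ℤ → ℂ) (k : ℤ) :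
    ‖f k‖ₑ = wcoef s f k * ENNReal.ofReal (jp k ^ (-s)) := by
  have hp := Real.rpow_pos_of_pos (jp_pos k) s
  have : ENNReal.ofReal (jp k ^ s) * ENNReal.ofReal (jp k ^ (-s)) = 1 := by
    rw [← ENNReal.ofReal_mul hp.le, ← Real.rpow_add (jp_pos k)]; simp
  rw [wcoef, mul_right_comm, this, one_mul]

lemma weight_le_ofReal {σ s α : ℝ} (hσ : 0 < σ) (hs : σ ≤ 3 * s) (hα : 2 * α = σ + 3 * s)
    (k₀ k₁ k₂ k₃ : ℤ) (r w : ℤ → ℝ≥0∞) (hr : ∀ k, r k = ENNReal.ofReal (jp k ^ (-s)))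
    (hw : ∀ k, w k = ENNReal.ofReal (jp k ^ (-α))) :
    ENNReal.ofReal (jp k₀ ^ (-σ)) * (r k₁ * r k₂ * r k₃) ≤
      w k₀ * w k₁ + w k₀ * w k₂ + w k₀ * w k₃ + w k₁ * w k₂ + w k₁ * w k₃ + w k₂ * w k₃ := by
  have P (k : ℤ) (t : ℝ) : 0 ≤ jp k ^ t := Real.rpow_nonneg (jp_pos k).le t
  have h := ENNReal.ofReal_le_ofReal
    (weight_le hσ hs hα (jp_pos k₀) (jp_pos k₁) (jp_pos k₂) (jp_pos k₃))
  have := P k₀ (-σ)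
  have := P k₀ (-α)
  have := P k₁ (-α)
  have := P k₂ (-α)
  have := P k₃ (-α)
  have := P k₁ (-s)
  have := P k₂ (-s)
  repeat rw [ENNReal.ofReal_add (by positivity) (by positivity)] at h
  repeat rw [ENNReal.ofReal_mul (by positivity)] at h
  simpa only [hr, hw] using h

/-- the trilinear product estimate
`‖v1 v2 v3‖_{H^{s1−1}} ≤ C ‖v1‖_{H^{s0}} ‖v2‖_{H^{s0}} ‖v3‖_{H^{s0}}`, the product being
expressed as the triple convolution of the Fourier coefficients. -/
theorem stmt14 (s0 s1 : ℝ) (hs0 : 1/4 < s0) (hs0' : s0 < 1/2)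
    (h1 : 1/2 < s1) (h2 : s1 < min 1 (3*s0)) :
    ∃ C : ℝ, 0 < C ∧
      ∀ v1 v2 v3 : ℤ → ℂ, MemH s0 v1 → MemH s0 v2 → MemH s0 v3 →
        HNorm (s1 - 1)
            (fun k : ℤ => ∑' p : ℤ × ℤ, v1 p.1 * v2 p.2 * v3 (k - p.1 - p.2)) ≤
          C * (HNorm s0 v1 * HNorm s0 v2 * HNorm s0 v3) := by
  set σ : ℝ := 1 - s1 with hσdef
  set α : ℝ := (σ + 3 * s0) / 2 with hα
  have hs1 := lt_min_iff.1 h2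
  set w : ℤ → ℝ≥0∞ := fun k => ENNReal.ofReal (jp k ^ (-α)) with hw
  have hwK : sqSum w ≠ ∞ := by
    have := (summable_jp_rpow (b := 2 * α) (by linarith [hs1.2])).tsum_ofReal_ne_top
    refine (tsum_congr fun k => ?_).trans_ne this
    rw [hw, ← ENNReal.ofReal_pow (Real.rpow_nonneg (jp_pos k).le _), ← jp_rpow_two_mul, mul_neg]
  -- the summand `1` only ensures that the constant is positive
  refine ⟨6 * (sqSum w).toReal + 1, by positivity, fun v1 v2 v3 m1 m2 m3 => ?_⟩
  have hpt (k : ℤ) :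
      wcoef (s1 - 1) (fun k => ∑' p : ℤ × ℤ, v1 p.1 * v2 p.2 * v3 (k - p.1 - p.2)) k ≤
        w k * tri (wcoef s0 v1 * w) (wcoef s0 v2) (wcoef s0 v3) k
        + w k * tri (wcoef s0 v1) (wcoef s0 v2 * w) (wcoef s0 v3) k
        + w k * tri (wcoef s0 v1) (wcoef s0 v2) (wcoef s0 v3 * w) k
        + tri (wcoef s0 v1 * w) (wcoef s0 v2 * w) (wcoef s0 v3) k
        + tri (wcoef s0 v1 * w) (wcoef s0 v2) (wcoef s0 v3 * w) k
        + tri (wcoef s0 v1) (wcoef s0 v2 * w) (wcoef s0 v3 * w) k := by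
    rw [wcoef, show s1 - 1 = -σ by rw [hσdef]; ring]
    refine (mul_le_mul_right enorm_tsum_le_tsum_enorm _).trans ?_
    simp only [tri, ← ENNReal.tsum_mul_left, ← ENNReal.tsum_add]
    refine ENNReal.tsum_le_tsum fun p => ?_
    have h := weight_le_ofReal (σ := σ) (s := s0) (α := α) (by linarith) (by linarith)
      (by rw [hα]; ring) k p.1 p.2 (k - p.1 - p.2)
      (fun k => ENNReal.ofReal (jp k ^ (-s0))) w (fun _ => rfl) (fun _ => rfl)
    simp only [enorm_mul, Pi.mul_apply]
    rw [enorm_eq_wcoef s0 v1, enorm_eq_wcoef s0 v2, enorm_eq_wcoef s0 v3]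
    generalize wcoef s0 v1 p.1 = a at h ⊢
    generalize wcoef s0 v2 p.2 = b at h ⊢
    generalize wcoef s0 v3 (k - p.1 - p.2) = c at h ⊢
    refine le_trans (le_of_eq ?_) ((mul_le_mul_right h (a * b * c)).trans (le_of_eq ?_))
    · ring
    · ring
  have hsum := (ENNReal.tsum_le_tsum fun k => pow_le_pow_left' (hpt k) 2).trans
    (sqSum_six_le w (wcoef s0 v1) (wcoef s0 v2) (wcoef s0 v3))
  have hreal := ENNReal.toReal_mono (ENNReal.mul_ne_top (by finiteness) (ENNReal.mul_ne_top
    (ENNReal.mul_ne_top (sqSum_wcoef_ne_top m1) (sqSum_wcoef_ne_top m2))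
    (sqSum_wcoef_ne_top m3))) hsum
  simp only [ENNReal.toReal_mul, ENNReal.toReal_pow, ENNReal.toReal_ofNat] at hreal
  simp only [HNorm_eq]
  rw [← Real.sqrt_mul ENNReal.toReal_nonneg, ← Real.sqrt_mul (by positivity)]
  refine (Real.sqrt_le_sqrt hreal).trans ?_
  rw [show (36 : ℝ) * (sqSum w).toReal ^ 2 = (6 * (sqSum w).toReal) ^ 2 by ring,
    Real.sqrt_mul (by positivity), Real.sqrt_sq (by positivity)]
  gcongr
  linarith
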